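/- arXiv:1812.09322 — 2 statements merged into one kernel-verified Lean document; each statement's English description precedes it below -/
import Mathlib

section
/- Let d ≥ 1 and L ≥ 1 be integers, let f ∈ C_b^L(ℝ^d), and let F : ℝ^d → ℝ be measurable with ∫ |F(z)|(1+‖z‖^L) dz < ∞. For x ∈ ℝ^d and h > 0 define R(x,h) := h^{−L} ( ∫ F(z) f(x+hz) dz − Σ_{|γ|≤L} h^{|γ|} (f^{(γ)}(x)/γ!) ∫ F(z) z^γ dz ). Then R is bounded on ℝ^d × (0,∞), and for every B > 0 one has sup_{‖x‖≤B} |R(x,h)| → 0 as h → 0. In particular, ∫ F(z) f(x+hz) dz = Σ_{|γ|≤L} h^{|γ|} (f^{(γ)}(x)/γ!) ∫ F(z) z^γ dz + O(h^L) uniformly in x and + o(h^L) locally uniformly in x. -/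
open MeasureTheory Filter Topology

noncomputable section

/-- `ℝ^d` as a pi type; `volume` is `d`-dimensional Lebesgue measure. -/
abbrev Vec (d : ℕ) := Fin d → ℝ

/-- The Euclidean norm on `ℝ^d`. -/
def euclNorm {d : ℕ} (z : Vec d) : ℝ := Real.sqrt (∑ i, z i ^ 2)

/-- Partial derivative in direction `i`. -/
noncomputable def pd {d : ℕ} (i : Fin d) (g : Vec d → ℝ) : Vec d → ℝ :=
  fun x => lineDeriv ℝ g x (Pi.single i 1)

/-- Iterated partial derivative `g^{(γ)}` for a multi-index `γ`. -/
noncomputable def mderiv {d : ℕ} (γ : Fin d → ℕ) (g : Vec d → ℝ) : Vec d → ℝ :=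
  (List.finRange d).foldr (fun i F => (pd i)^[γ i] F) g

/-- The finite set of all multi-indices `γ ∈ ℕ₀^d` with `|γ| ≤ L`. -/
def multiIdxUpTo (d L : ℕ) : Finset (Fin d → ℕ) :=
  (Fintype.piFinset fun _ : Fin d => Finset.range (L + 1)).filter fun γ => ∑ i, γ i ≤ L

lemma pd_eq {d : ℕ} {g : Vec d → ℝ} (hg : ContDiff ℝ 1 g) (i : Fin d) :
    pd i g = fun x => fderiv ℝ g x (Pi.single i 1) := by
  funext x
  exact ((hg.differentiable one_ne_zero) x).lineDeriv_eq_fderiv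

lemma pd_contDiff {d n : ℕ} {g : Vec d → ℝ} (hg : ContDiff ℝ ((n + 1 : ℕ) : ℕ∞) g) (i : Fin d) :
    ContDiff ℝ (n : ℕ∞) (pd i g) := by
  rw [pd_eq (hg.of_le (by norm_cast; simp)) i]
  exact (hg.fderiv_right (m := ((n:ℕ∞) : WithTop ℕ∞)) (by norm_cast)).clm_apply contDiff_const

lemma pd_comm {d : ℕ} {g : Vec d → ℝ} (hg : ContDiff ℝ ((2 : ℕ) : ℕ∞) g) (i j : Fin d) :
    pd i (pd j g) = pd j (pd i g) := by
  have h1 : ContDiff ℝ 1 g := hg.of_le (by norm_cast)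
  have hi : ContDiff ℝ 1 (pd i g) := pd_contDiff (n := 1) hg i
  have hj : ContDiff ℝ 1 (pd j g) := pd_contDiff (n := 1) hg j
  have hd : Differentiable ℝ (fderiv ℝ g) :=
    (hg.fderiv_right (m := 1) (by norm_cast)).differentiable one_ne_zero
  rw [pd_eq hi, pd_eq hj, pd_eq h1, pd_eq h1]
  funext x
  have hs : IsSymmSndFDerivAt ℝ g x :=
    hg.contDiffAt.isSymmSndFDerivAt (by simp)
  rw [fderiv_clm_apply (hd x) (by fun_prop), fderiv_clm_apply (hd x) (by fun_prop)]
  simpa using hs (Pi.single i 1) (Pi.single j 1)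

lemma pd_iter_contDiff {d : ℕ} (i : Fin d) (m n : ℕ) {g : Vec d → ℝ}
    (hg : ContDiff ℝ ((n + m : ℕ) : ℕ∞) g) : ContDiff ℝ (n : ℕ∞) ((pd i)^[m] g) := by
  induction m generalizing g with
  | zero => simpa using hg
  | succ m ih =>
    rw [Function.iterate_succ_apply]
    exact ih (pd_contDiff (n := n + m) hg i)

lemma pd_iter_comm {d : ℕ} (i j : Fin d) (m : ℕ) {g : Vec d → ℝ}
    (hg : ContDiff ℝ ((m + 1 : ℕ) : ℕ∞) g) : (pd j)^[m] (pd i g) = pd i ((pd j)^[m] g) := by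
  induction m generalizing g with
  | zero => rfl
  | succ m ih =>
    rw [Function.iterate_succ_apply, Function.iterate_succ_apply,
      ← pd_comm (hg.of_le (by norm_cast; omega)) i j, ih (pd_contDiff (n := m + 1) hg j)]

lemma foldr_contDiff {d : ℕ} (γ : Fin d → ℕ) (l : List (Fin d)) (n : ℕ) {g : Vec d → ℝ}
    (hg : ContDiff ℝ ((n + (l.map γ).sum : ℕ) : ℕ∞) g) :
    ContDiff ℝ (n : ℕ∞) (l.foldr (fun i F => (pd i)^[γ i] F) g) := by
  induction l generalizing n with
  | nil => simpa using hg
  | cons a l ih =>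
    rw [List.foldr_cons]
    apply pd_iter_contDiff
    apply ih
    simpa [add_assoc] using hg

lemma foldr_congr' {d : ℕ} (γ γ' : Fin d → ℕ) (l : List (Fin d)) (g : Vec d → ℝ)
    (h : ∀ i ∈ l, γ i = γ' i) :
    l.foldr (fun i F => (pd i)^[γ i] F) g = l.foldr (fun i F => (pd i)^[γ' i] F) g := by
  induction l with
  | nil => rfl
  | cons a l ih =>
    rw [List.foldr_cons, List.foldr_cons, ih (fun i hi => h i (by simp [hi])), h a (by simp)]

lemma foldr_add {d : ℕ} (γ : Fin d → ℕ) (i : Fin d) (l : List (Fin d)) (hl : l.Nodup) (hi : i ∈ l)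
    {g : Vec d → ℝ} (hg : ContDiff ℝ (((l.map γ).sum + 1 : ℕ) : ℕ∞) g) :
    l.foldr (fun j F => (pd j)^[(γ + Pi.single i 1 : Fin d → ℕ) j] F) g =
      pd i (l.foldr (fun j F => (pd j)^[γ j] F) g) := by
  induction l with
  | nil => simp at hi
  | cons a l ih =>
    rw [List.nodup_cons] at hl
    rw [List.foldr_cons, List.foldr_cons]
    by_cases hia : i = a
    · subst hia
      rw [foldr_congr' (γ + Pi.single i 1) γ l g]
      · simp [-Function.iterate_succ, Function.iterate_succ_apply']
      · intro j hj
        have : j ≠ i := fun h => hl.1 (h ▸ hj)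
        simp [this]
    · have hi' : i ∈ l := by simpa [hia] using hi
      rw [ih hl.2 hi' (hg.of_le (by norm_cast; simp))]
      have : (γ + Pi.single i 1 : Fin d → ℕ) a = γ a := by simp [Ne.symm hia]
      rw [this]
      apply pd_iter_comm
      apply foldr_contDiff
      convert hg using 3
      simp; ring

lemma mderiv_contDiff {d : ℕ} (γ : Fin d → ℕ) (n m : ℕ) {g : Vec d → ℝ}
    (hg : ContDiff ℝ (m : ℕ∞) g) (h : n + ∑ i, γ i ≤ m) :
    ContDiff ℝ (n : ℕ∞) (mderiv γ g) := by
  apply foldr_contDiff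
  apply hg.of_le
  rw [← List.ofFn_eq_map, List.sum_ofFn]
  exact_mod_cast h

lemma mderiv_add {d : ℕ} (γ : Fin d → ℕ) (i : Fin d) (m : ℕ) {g : Vec d → ℝ}
    (hg : ContDiff ℝ (m : ℕ∞) g) (h : ∑ i, γ i + 1 ≤ m) :
    mderiv (γ + Pi.single i 1) g = pd i (mderiv γ g) := by
  apply foldr_add _ _ _ (List.nodup_finRange d) (List.mem_finRange i)
  apply hg.of_le
  rw [← List.ofFn_eq_map, List.sum_ofFn]
  exact_mod_cast h

lemma mderiv_zero {d : ℕ} (g : Vec d → ℝ) : mderiv 0 g = g := by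
  unfold mderiv
  induction List.finRange d with
  | nil => rfl
  | cons a l ih => rw [List.foldr_cons, ih]; rfl

/-- degree `k` Taylor polynomial. -/
def tp {d : ℕ} (f : Vec d → ℝ) (k : ℕ) (x v : Vec d) : ℝ :=
  ∑ γ ∈ Finset.piAntidiag Finset.univ k,
    mderiv γ f x / ((∏ i, Nat.factorial (γ i) : ℕ) : ℝ) * ∏ i, v i ^ γ i

lemma hasDerivAt_line {d : ℕ} {g : Vec d → ℝ} (hg : ContDiff ℝ 1 g) (x v : Vec d) (t : ℝ) :
    HasDerivAt (fun t : ℝ => g (x + t • v)) (∑ i, v i * pd i g (x + t • v)) t := by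
  have h1 : HasDerivAt (fun t : ℝ => x + t • v) v t := by
    simpa using ((hasDerivAt_id t).smul_const v).const_add x
  have h2 := ((hg.differentiable one_ne_zero) (x + t • v)).hasFDerivAt.comp_hasDerivAt t h1
  refine h2.congr_deriv ?_
  symm
  simp only [pd_eq hg]
  generalize fderiv ℝ g (x + t • v) = A
  conv_rhs => rw [pi_eq_sum_univ' v]
  simp [map_sum]

lemma mem_pa {d k : ℕ} {γ : Fin d → ℕ} :
    γ ∈ Finset.piAntidiag Finset.univ k ↔ ∑ i, γ i = k := by
  simp [Finset.mem_piAntidiag]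

lemma tp_reindex {d : ℕ} (k : ℕ) (A : (Fin d → ℕ) → ℝ) (v : Vec d) :
    ∑ γ ∈ Finset.piAntidiag Finset.univ k, ∑ i,
      A (γ + Pi.single i 1) / ((∏ i, Nat.factorial (γ i) : ℕ) : ℝ) * (v i * ∏ j, v j ^ γ j) =
    (k + 1) * ∑ γ ∈ Finset.piAntidiag Finset.univ (k + 1),
      A γ / ((∏ i, Nat.factorial (γ i) : ℕ) : ℝ) * ∏ j, v j ^ γ j := by
  have hR : ∀ γ ∈ Finset.piAntidiag (Finset.univ : Finset (Fin d)) (k + 1),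
      ((k : ℝ) + 1) * (A γ / ((∏ i, Nat.factorial (γ i) : ℕ) : ℝ) * ∏ j, v j ^ γ j) =
      ∑ i, (γ i : ℝ) * (A γ / ((∏ i, Nat.factorial (γ i) : ℕ) : ℝ) * ∏ j, v j ^ γ j) := by
    intro γ hγ
    rw [← Finset.sum_mul]
    congr 1
    have := mem_pa.1 hγ
    exact_mod_cast this.symm
  rw [Finset.mul_sum, Finset.sum_congr rfl hR, Finset.sum_comm, Finset.sum_comm (t := Finset.univ)]
  refine Finset.sum_congr rfl fun i _ => ?_
  symm
  rw [← Finset.sum_filter_of_ne (p := fun γ : Fin d → ℕ => γ i ≠ 0)]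
  swap
  · intro γ _ h h0
    simp [h0] at h
  refine Finset.sum_bij' (fun γ _ => γ - Pi.single i 1) (fun γ _ => γ + Pi.single i 1) ?_ ?_ ?_ ?_ ?_
  · intro γ hγ
    simp only [Finset.mem_filter, mem_pa] at hγ ⊢
    have hle : Pi.single i 1 ≤ γ := by
      intro j; by_cases h : j = i
      · subst h; simp; omega
      · simp [h]
    have h2 : γ = (γ - Pi.single i 1) + Pi.single i 1 := (tsub_add_cancel_of_le hle).symm
    have h3 := hγ.1
    rw [h2] at h3
    simp only [Pi.add_apply, Finset.sum_add_distrib, Finset.sum_pi_single', Finset.mem_univ, if_true] at h3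
    omega
  · intro γ hγ
    simp only [Finset.mem_filter, mem_pa] at hγ ⊢
    refine ⟨?_, by simp⟩
    simp only [Pi.add_apply, Finset.sum_add_distrib, Finset.sum_pi_single', Finset.mem_univ, if_true]
    omega
  · intro γ hγ
    simp only [Finset.mem_filter] at hγ
    apply tsub_add_cancel_of_le
    intro j; by_cases h : j = i
    · subst h; simp; omega
    · simp [h]
  · intro γ hγ
    simp
  · intro γ hγ
    simp only [Finset.mem_filter] at hγ
    have hle : Pi.single i 1 ≤ γ := by
      intro j; by_cases h : j = i
      · subst h; simp; omega
      · simp [h]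
    obtain ⟨δ, rfl⟩ : ∃ δ : Fin d → ℕ, γ = δ + Pi.single i 1 := ⟨_, (tsub_add_cancel_of_le hle).symm⟩
    rw [add_tsub_cancel_right]
    have e1 : ∏ j, v j ^ (δ + Pi.single i 1 : Fin d → ℕ) j = v i * ∏ j, v j ^ δ j := by
      simp only [Pi.add_apply, pow_add, Finset.prod_mul_distrib]
      rw [mul_comm]; congr 1
      rw [Finset.prod_eq_single i] <;> simp +contextual
    have e2 : ∏ j, Nat.factorial ((δ + Pi.single i 1 : Fin d → ℕ) j) = (δ i + 1) * ∏ j, Nat.factorial (δ j) := by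
      rw [← Finset.mul_prod_erase _ _ (Finset.mem_univ i),
        ← Finset.mul_prod_erase _ (fun j => Nat.factorial (δ j)) (Finset.mem_univ i), ← mul_assoc]
      congr 1
      · simp [Nat.factorial_succ]
      · refine Finset.prod_congr rfl fun j hj => ?_
        simp [Finset.ne_of_mem_erase hj]
    rw [e1, e2]
    have h4 : ((∏ j, Nat.factorial (δ j) : ℕ) : ℝ) ≠ 0 := by
      exact_mod_cast (Finset.prod_pos fun j _ => Nat.factorial_pos _).ne'
    have h5 : ((δ i : ℝ) + 1) ≠ 0 := by positivity
    rw [Nat.cast_mul]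
    simp only [Pi.add_apply, Pi.single_eq_same, Nat.cast_add, Nat.cast_one]
    generalize ((∏ j, Nat.factorial (δ j) : ℕ) : ℝ) = c at *
    field_simp

lemma tp_hasDerivAt {d L : ℕ} {f : Vec d → ℝ} (hf : ContDiff ℝ (L : ℕ∞) f) (k : ℕ) (hk : k + 1 ≤ L)
    (x v : Vec d) (t : ℝ) :
    HasDerivAt (fun t : ℝ => tp f k (x + t • v) v) ((k + 1) * tp f (k + 1) (x + t • v) v) t := by
  unfold tp
  rw [← tp_reindex k (fun γ => mderiv γ f (x + t • v)) v]
  apply HasDerivAt.fun_sum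
  intro γ hγ
  have hs := mem_pa.1 hγ
  have hc : ContDiff ℝ 1 (mderiv γ f) := mderiv_contDiff γ 1 L hf (by omega)
  have := ((hasDerivAt_line hc x v t).div_const ((∏ i, Nat.factorial (γ i) : ℕ) : ℝ)).mul_const
    (∏ j, v j ^ γ j)
  refine this.congr_deriv ?_
  rw [Finset.sum_div, Finset.sum_mul]
  refine Finset.sum_congr rfl fun i _ => ?_
  rw [mderiv_add γ i L hf (by omega)]
  ring

lemma tp_zero {d : ℕ} (f : Vec d → ℝ) (x v : Vec d) : tp f 0 x v = f x := by
  simp [tp, mderiv_zero]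

lemma iteratedDeriv_tp {d L : ℕ} {f : Vec d → ℝ} (hf : ContDiff ℝ (L : ℕ∞) f) (k : ℕ) (hk : k ≤ L)
    (x v : Vec d) :
    iteratedDeriv k (fun t : ℝ => f (x + t • v)) = fun t => k.factorial * tp f k (x + t • v) v := by
  induction k with
  | zero => funext t; simp [tp_zero]
  | succ k ih =>
    rw [iteratedDeriv_succ, ih (by omega)]
    funext t
    rw [((tp_hasDerivAt hf k hk x v t).const_mul _).deriv, Nat.factorial_succ]
    push_cast; ring

lemma taylor_tp {d L : ℕ} (hL : 1 ≤ L) {f : Vec d → ℝ} (hf : ContDiff ℝ (L : ℕ∞) f)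
    (x v : Vec d) : ∃ θ ∈ Set.Ioo (0:ℝ) 1,
      f (x + v) - ∑ k ∈ Finset.range (L + 1), tp f k x v = tp f L (x + θ • v) v - tp f L x v := by
  obtain ⟨n, rfl⟩ : ∃ n, L = n + 1 := ⟨L - 1, by omega⟩
  have hg : ContDiff ℝ ((n + 1 : ℕ) : ℕ∞) (fun t : ℝ => f (x + t • v)) :=
    hf.comp (by fun_prop)
  obtain ⟨θ, hθ, h⟩ := taylor_mean_remainder_lagrange_iteratedDeriv (f := fun t : ℝ => f (x + t • v))
    (n := n) (zero_ne_one (α := ℝ)) (by exact_mod_cast hg.contDiffOn)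
  rw [Set.uIoo_of_le zero_le_one] at hθ
  refine ⟨θ, hθ, ?_⟩
  rw [iteratedDeriv_tp hf _ le_rfl, taylor_within_apply] at h
  rw [Finset.sum_range_succ]
  have e : ∀ k ∈ Finset.range (n + 1), ((k.factorial : ℝ)⁻¹ * (1 - 0) ^ k) •
      iteratedDerivWithin k (fun t : ℝ => f (x + t • v)) (Set.uIcc 0 1) 0 = tp f k x v := by
    intro k hk
    have hk := Finset.mem_range.1 hk
    rw [Set.uIcc_of_le zero_le_one,
      iteratedDerivWithin_eq_iteratedDeriv (uniqueDiffOn_Icc zero_lt_one)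
      (hg.contDiffAt.of_le (by norm_cast; omega)) (by simp), iteratedDeriv_tp hf _ (by omega)]
    have : (k.factorial : ℝ) ≠ 0 := by positivity
    simp [this]
  rw [Finset.sum_congr rfl e] at h
  have : ((n+1).factorial : ℝ) ≠ 0 := by positivity
  simp only [one_smul, sub_zero, one_pow, mul_one] at h
  rw [mul_div_cancel_left₀ _ this] at h
  linarith

lemma euclNorm_nonneg {d : ℕ} (z : Vec d) : 0 ≤ euclNorm z := Real.sqrt_nonneg _

lemma abs_le_euclNorm {d : ℕ} (z : Vec d) (i : Fin d) : |z i| ≤ euclNorm z := by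
  apply Real.abs_le_sqrt
  exact Finset.single_le_sum (f := fun i => z i ^ 2) (fun j _ => sq_nonneg _) (Finset.mem_univ i)

lemma euclNorm_smul {d : ℕ} (h : ℝ) (hh : 0 < h) (z : Vec d) :
    euclNorm (h • z) = h * euclNorm z := by
  unfold euclNorm
  simp only [Pi.smul_apply, smul_eq_mul, mul_pow, ← Finset.mul_sum]
  rw [Real.sqrt_mul (by positivity), Real.sqrt_sq hh.le]

lemma euclNorm_continuous {d : ℕ} : Continuous (euclNorm : Vec d → ℝ) := by
  unfold euclNorm; fun_prop

lemma prod_le_euclNorm {d : ℕ} (z : Vec d) (γ : Fin d → ℕ) :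
    |∏ i, z i ^ γ i| ≤ euclNorm z ^ (∑ i, γ i) := by
  rw [Finset.abs_prod, ← Finset.prod_pow_eq_pow_sum]
  refine Finset.prod_le_prod (fun _ _ => abs_nonneg _) fun i _ => ?_
  rw [abs_pow]
  exact pow_le_pow_left₀ (abs_nonneg _) (abs_le_euclNorm z i) _

lemma pow_le_one_add {a : ℝ} (ha : 0 ≤ a) {k L : ℕ} (hk : k ≤ L) : a ^ k ≤ 1 + a ^ L := by
  rcases le_total a 1 with h | h
  · have := pow_le_one₀ (n := k) ha h
    have := pow_nonneg ha L
    linarith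
  · have := pow_le_pow_right₀ h hk
    linarith

lemma rem_bound {d L : ℕ} (hL : 1 ≤ L) {f : Vec d → ℝ} (hf : ContDiff ℝ (L : ℕ∞) f)
    (x v : Vec d) (c : ℝ)
    (hc : ∀ γ ∈ Finset.piAntidiag (Finset.univ : Finset (Fin d)) L, ∀ θ ∈ Set.Ioo (0:ℝ) 1,
      |mderiv γ f (x + θ • v) - mderiv γ f x| ≤ c) :
    |f (x + v) - ∑ k ∈ Finset.range (L + 1), tp f k x v| ≤
      (Finset.piAntidiag (Finset.univ : Finset (Fin d)) L).card * (c * euclNorm v ^ L) := by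
  obtain ⟨θ, hθ, h⟩ := taylor_tp hL hf x v
  rw [h, tp, tp, ← Finset.sum_sub_distrib, ← nsmul_eq_mul, ← Finset.sum_const]
  refine (Finset.abs_sum_le_sum_abs _ _).trans (Finset.sum_le_sum fun γ hγ => ?_)
  rw [← sub_mul, ← sub_div, abs_mul]
  have hg := mem_pa.1 hγ
  have h1 := hc γ hγ θ hθ
  have h2 := prod_le_euclNorm v γ
  rw [hg] at h2
  refine mul_le_mul ?_ h2 (abs_nonneg _) ((abs_nonneg _).trans h1)
  rw [abs_div]
  refine (div_le_self (abs_nonneg _) ?_).trans h1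
  rw [Nat.abs_cast]
  exact_mod_cast Finset.prod_pos fun j _ => Nat.factorial_pos _

lemma sum_multiIdx {d L : ℕ} (G : (Fin d → ℕ) → ℝ) :
    ∑ γ ∈ multiIdxUpTo d L, G γ =
      ∑ k ∈ Finset.range (L + 1), ∑ γ ∈ Finset.piAntidiag (Finset.univ : Finset (Fin d)) k, G γ := by
  rw [← Finset.sum_fiberwise_of_maps_to (s := multiIdxUpTo d L) (t := Finset.range (L + 1))
    (g := fun γ => ∑ i, γ i)]
  · refine Finset.sum_congr rfl fun k hk => Finset.sum_congr ?_ fun _ _ => rfl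
    ext γ
    have hk := Finset.mem_range.1 hk
    simp only [multiIdxUpTo, Finset.mem_filter, Fintype.mem_piFinset, Finset.mem_range, mem_pa]
    constructor
    · exact fun h => h.2
    · intro h
      refine ⟨⟨fun i => ?_, by omega⟩, h⟩
      have := Finset.single_le_sum (f := γ) (fun j _ => Nat.zero_le _) (Finset.mem_univ i)
      omega
  · intro γ hγ
    simp only [multiIdxUpTo, Finset.mem_filter] at hγ
    simp only [Finset.mem_range]
    omega

/-- Taylor remainder. -/
def rho {d : ℕ} (L : ℕ) (f : Vec d → ℝ) (x : Vec d) (h : ℝ) (z : Vec d) : ℝ :=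
  (f (x + h • z) - ∑ k ∈ Finset.range (L + 1), tp f k x (h • z)) / h ^ L

lemma rho_bound {d L : ℕ} (hL : 1 ≤ L) {f : Vec d → ℝ} (hf : ContDiff ℝ (L : ℕ∞) f)
    (x z : Vec d) (h : ℝ) (hh : 0 < h) (c : ℝ)
    (hc : ∀ γ ∈ Finset.piAntidiag (Finset.univ : Finset (Fin d)) L, ∀ θ ∈ Set.Ioo (0:ℝ) 1,
      |mderiv γ f (x + θ • h • z) - mderiv γ f x| ≤ c) :
    |rho L f x h z| ≤
      (Finset.piAntidiag (Finset.univ : Finset (Fin d)) L).card * (c * euclNorm z ^ L) := by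
  have := rem_bound hL hf x (h • z) c hc
  have hp : 0 < h ^ L := pow_pos hh L
  rw [rho, abs_div, abs_of_pos hp, div_le_iff₀ hp]
  rw [euclNorm_smul h hh, mul_pow] at this
  linarith

lemma rho_continuous {d L : ℕ} {f : Vec d → ℝ} (hf : Continuous f) (x : Vec d) (h : ℝ) :
    Continuous (rho L f x h) := by
  unfold rho tp; fun_prop

lemma R_eq {d L : ℕ}
    (f : Vec d → ℝ) (hf : ContDiff ℝ (L : ℕ∞) f)
    (hfb : ∀ γ : Fin d → ℕ, (∑ i, γ i) ≤ L → ∃ C : ℝ, ∀ x, |mderiv γ f x| ≤ C)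
    (F : Vec d → ℝ) (hF : Measurable F)
    (hFi : Integrable (fun z => |F z| * (1 + euclNorm z ^ L))) (x : Vec d) (h : ℝ) :
      ((∫ z, F z * f (x + h • z)) -
        ∑ γ ∈ multiIdxUpTo d L,
          h ^ (∑ i, γ i) * (mderiv γ f x / ((∏ i, Nat.factorial (γ i) : ℕ) : ℝ)) *
            ∫ z, F z * ∏ i, z i ^ γ i) / h ^ L = ∫ z, F z * rho L f x h z := by
  have hfc := hf.continuous
  have hint1 : Integrable (fun z => F z * f (x + h • z)) := by
    obtain ⟨C, hC⟩ := hfb 0 (by simp)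
    rw [mderiv_zero] at hC
    have hC0 : 0 ≤ C := (abs_nonneg _).trans (hC 0)
    refine (hFi.const_mul C).mono' (by
      exact (hF.mul (by fun_prop : Continuous fun z => f (x + h • z)).measurable).aestronglyMeasurable)
      (Eventually.of_forall fun z => ?_)
    rw [Real.norm_eq_abs, abs_mul]
    have h1 := hC (x + h • z)
    have h2 : 0 ≤ euclNorm z ^ L := pow_nonneg (euclNorm_nonneg z) L
    calc |F z| * |f (x + h • z)| ≤ |F z| * C := by gcongr
      _ ≤ C * (|F z| * (1 + euclNorm z ^ L)) := by
        have : 0 ≤ C * |F z| * euclNorm z ^ L := by positivity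
        linarith
  have hint2 : ∀ γ ∈ multiIdxUpTo d L, Integrable (fun z : Vec d => F z * ∏ i, z i ^ γ i) := by
    intro γ hγ
    simp only [multiIdxUpTo, Finset.mem_filter] at hγ
    refine hFi.mono' (by
      exact (hF.mul (by fun_prop : Continuous fun z : Vec d => ∏ i, z i ^ γ i).measurable).aestronglyMeasurable)
      (Eventually.of_forall fun z => ?_)
    rw [Real.norm_eq_abs, abs_mul]
    gcongr
    exact (prod_le_euclNorm z γ).trans (pow_le_one_add (euclNorm_nonneg z) hγ.2)
  simp only [← integral_const_mul]
  rw [← integral_finsetSum _ (fun γ hγ => (hint2 γ hγ).const_mul _),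
    ← integral_sub hint1 (integrable_finsetSum _ (fun γ hγ => (hint2 γ hγ).const_mul _)),
    ← integral_div]
  congr 1
  funext z
  rw [rho, sum_multiIdx, mul_div_assoc', mul_sub, Finset.mul_sum]
  congr 2
  refine Finset.sum_congr rfl fun k _ => ?_
  rw [tp, Finset.mul_sum]
  refine Finset.sum_congr rfl fun γ _ => ?_
  simp only [Pi.smul_apply, smul_eq_mul, mul_pow, Finset.prod_mul_distrib, Finset.prod_pow_eq_pow_sum]
  ring

/-- Taylor expansion of `∫ F(z) f(x+hz) dz`, with remainder `O(h^L)`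
uniformly in `x` and `o(h^L)` locally uniformly in `x`. -/
theorem statement0 {d L : ℕ} (hd : 1 ≤ d) (hL : 1 ≤ L)
    (f : Vec d → ℝ) (hf : ContDiff ℝ (L : ℕ∞) f)
    (hfb : ∀ γ : Fin d → ℕ, (∑ i, γ i) ≤ L → ∃ C : ℝ, ∀ x, |mderiv γ f x| ≤ C)
    (F : Vec d → ℝ) (hF : Measurable F)
    (hFi : Integrable (fun z => |F z| * (1 + euclNorm z ^ L)))
    (R : Vec d → ℝ → ℝ)
    (hR : ∀ (x : Vec d) (h : ℝ), R x h =
      ((∫ z, F z * f (x + h • z)) -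
        ∑ γ ∈ multiIdxUpTo d L,
          h ^ (∑ i, γ i) * (mderiv γ f x / ((∏ i, Nat.factorial (γ i) : ℕ) : ℝ)) *
            ∫ z, F z * ∏ i, z i ^ γ i) / h ^ L) :
    (∃ C : ℝ, ∀ (x : Vec d) (h : ℝ), 0 < h → |R x h| ≤ C) ∧
      ∀ B > (0 : ℝ), ∀ ε > (0 : ℝ), ∃ δ > (0 : ℝ), ∀ h : ℝ, 0 < h → h < δ →
        ∀ x : Vec d, euclNorm x ≤ B → |R x h| ≤ ε := by
  have hR' : ∀ x h, R x h = ∫ z, F z * rho L f x h z := fun x h => by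
    rw [hR, R_eq f hf hfb F hF hFi]
  clear hR
  set N : ℝ := ((Finset.piAntidiag (Finset.univ : Finset (Fin d)) L).card : ℝ) with hN
  have hN0 : 0 ≤ N := Nat.cast_nonneg _
  obtain ⟨C, hC0, hC⟩ : ∃ C : ℝ, 0 ≤ C ∧
      ∀ γ ∈ Finset.piAntidiag (Finset.univ : Finset (Fin d)) L, ∀ x, |mderiv γ f x| ≤ C := by
    choose! C hC using hfb
    refine ⟨∑ γ ∈ Finset.piAntidiag (Finset.univ : Finset (Fin d)) L, |C γ|,
      Finset.sum_nonneg fun _ _ => abs_nonneg _, fun γ hγ x => ?_⟩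
    exact ((hC γ (mem_pa.1 hγ).le x).trans (le_abs_self _)).trans
      (Finset.single_le_sum (f := fun γ => |C γ|) (fun _ _ => abs_nonneg _) hγ)
  set bd : Vec d → ℝ := fun z => (N * (2 * C)) * (|F z| * (1 + euclNorm z ^ L)) with hbd
  have hbdi : Integrable bd := hFi.const_mul _
  have hle : ∀ x h z, 0 < h → ‖F z * rho L f x h z‖ ≤ bd z := by
    intro x h z hh
    have := rho_bound hL hf x z h hh (2 * C) (fun γ hγ θ _ => by
      have h1 := hC γ hγ (x + θ • h • z)
      have h2 := hC γ hγ x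
      have := abs_sub (mderiv γ f (x + θ • h • z)) (mderiv γ f x)
      linarith)
    rw [Real.norm_eq_abs, abs_mul, hbd]
    have h3 : 0 ≤ N * (2 * C) * |F z| := by positivity
    calc |F z| * |rho L f x h z| ≤ |F z| * (N * (2 * C * euclNorm z ^ L)) := by gcongr
      _ ≤ _ := by
        simp only
        linarith
  refine ⟨⟨∫ z, bd z, fun x h hh => ?_⟩, ?_⟩
  · rw [hR']
    exact norm_integral_le_of_norm_le hbdi (Eventually.of_forall fun z => hle x h z hh)
  intro B hB ε hε
  have key : Tendsto (fun p : ℝ × Vec d => ∫ z, F z * rho L f p.2 p.1 z)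
      (𝓝[>] 0 ×ˢ 𝓟 (Metric.closedBall (0 : Vec d) B)) (𝓝 (∫ z : Vec d, (0 : ℝ))) := by
    have hpos : ∀ᶠ p : ℝ × Vec d in 𝓝[>] 0 ×ˢ 𝓟 (Metric.closedBall (0 : Vec d) B), 0 < p.1 :=
      tendsto_fst.eventually self_mem_nhdsWithin
    refine tendsto_integral_filter_of_dominated_convergence bd ?_ ?_ hbdi ?_
    · exact Eventually.of_forall fun p =>
        (hF.mul (rho_continuous hf.continuous _ _).measurable).aestronglyMeasurable
    · filter_upwards [hpos] with p hp
      exact Eventually.of_forall fun z => hle _ _ z hp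
    · refine Eventually.of_forall fun z => ?_
      suffices hs : Tendsto (fun p : ℝ × Vec d => rho L f p.2 p.1 z)
          (𝓝[>] 0 ×ˢ 𝓟 (Metric.closedBall (0 : Vec d) B)) (𝓝 0) by
        simpa using hs.const_mul (F z)
      rw [Metric.tendsto_nhds]
      intro η hη
      set D : ℝ := N * euclNorm z ^ L + 1 with hD
      have hE : 0 ≤ euclNorm z ^ L := pow_nonneg (euclNorm_nonneg z) L
      have hD0 : 0 < D := by positivity
      have hc0 : 0 < η / D := by positivity
      have huc : ∀ γ ∈ Finset.piAntidiag (Finset.univ : Finset (Fin d)) L, ∃ δ > 0,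
          ∀ a ∈ Metric.closedBall (0 : Vec d) (B + 1), ∀ b ∈ Metric.closedBall (0 : Vec d) (B + 1),
            dist a b < δ → dist (mderiv γ f a) (mderiv γ f b) < η / D := by
        intro γ hγ
        have hcont : Continuous (mderiv γ f) :=
          (mderiv_contDiff γ 0 L hf (by rw [mem_pa.1 hγ]; omega)).continuous
        exact Metric.uniformContinuousOn_iff.1
          ((isCompact_closedBall (0 : Vec d) (B + 1)).uniformContinuousOn_of_continuous
            hcont.continuousOn) _ hc0
      have hz : ∀ δ > 0, ∀ᶠ p : ℝ × Vec d in 𝓝[>] 0 ×ˢ 𝓟 (Metric.closedBall (0 : Vec d) B),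
          p.1 * ‖z‖ < δ := by
        intro δ hδ
        have : Tendsto (fun h : ℝ => h * ‖z‖) (𝓝[>] 0) (𝓝 0) := by
          have : Tendsto (fun h : ℝ => h * ‖z‖) (𝓝 0) (𝓝 (0 * ‖z‖)) :=
            (continuous_id.mul continuous_const).tendsto _
          rw [zero_mul] at this
          exact this.mono_left nhdsWithin_le_nhds
        exact tendsto_fst.eventually (this.eventually_lt_const hδ)
      choose! δ hδ0 hδ using huc
      have hall : ∀ᶠ p : ℝ × Vec d in 𝓝[>] 0 ×ˢ 𝓟 (Metric.closedBall (0 : Vec d) B),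
          ∀ γ ∈ Finset.piAntidiag (Finset.univ : Finset (Fin d)) L, p.1 * ‖z‖ < δ γ := by
        rw [Filter.eventually_all_finset]
        exact fun γ hγ => hz _ (hδ0 γ hγ)
      have hmem : ∀ᶠ p : ℝ × Vec d in 𝓝[>] 0 ×ˢ 𝓟 (Metric.closedBall (0 : Vec d) B),
          p.2 ∈ Metric.closedBall (0 : Vec d) B :=
        tendsto_snd.eventually (mem_principal_self _)
      filter_upwards [hpos, hall, hz 1 one_pos, hmem] with p hp h1 h2 h3
      have hb := rho_bound hL hf p.2 z p.1 hp (η / D) (fun γ hγ θ hθ => by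
        have hn : ‖θ • p.1 • z‖ ≤ p.1 * ‖z‖ := by
          rw [norm_smul, norm_smul, Real.norm_eq_abs, Real.norm_eq_abs, abs_of_pos hθ.1,
            abs_of_pos hp]
          exact mul_le_of_le_one_left (by positivity) hθ.2.le
        rw [mem_closedBall_zero_iff] at h3
        refine (hδ γ hγ (p.2 + θ • p.1 • z) ?_ p.2 ?_ ?_).le
        · rw [mem_closedBall_zero_iff]
          exact (norm_add_le _ _).trans (by linarith)
        · rw [mem_closedBall_zero_iff]; linarith
        · rw [dist_eq_norm, add_sub_cancel_left]
          exact hn.trans_lt (h1 γ hγ))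
      rw [Real.dist_eq, sub_zero]
      refine hb.trans_lt ?_
      rw [← hN, show N * (η / D * euclNorm z ^ L) = η * ((N * euclNorm z ^ L) / D) by ring]
      have : (N * euclNorm z ^ L) / D < 1 := by rw [div_lt_one hD0]; linarith
      nlinarith
  rw [integral_zero, Metric.tendsto_nhds] at key
  have := eventually_prod_principal_iff.1 (key ε hε)
  rw [eventually_nhdsWithin_iff, Metric.eventually_nhds_iff] at this
  obtain ⟨δ, hδ, hh⟩ := this
  refine ⟨δ, hδ, fun h h0 hlt x hx => ?_⟩
  have := hh (y := h) (by rw [Real.dist_eq, sub_zero, abs_of_pos h0]; exact hlt) h0 x (by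
    rw [mem_closedBall_zero_iff, pi_norm_le_iff_of_nonneg hB.le]
    exact fun i => (abs_le_euclNorm x i).trans hx)
  rw [Real.dist_eq, sub_zero] at this
  rw [hR']
  exact this.le
end
end

section
/- Let f ∈ C_b^2(ℝ^d) and let K be a kernel satisfying (K0)–(K2). For h > 0 and x ∈ ℝ^d define s_h(x) := ∫ K(z) f(x+hz) dz ∈ ℝ, 𝔰_h(x) := ∫ K(z) z f(x+hz) dz ∈ ℝ^d, and S_h(x) := ∫ K(z) z zᵀ f(x+hz) dz ∈ Sym_d(ℝ). Then, as h → 0, locally uniformly in x, (s_h(x), 𝔰_h(x), S_h(x)) = J(f(x), h Df(x), h² D²f(x)) + o(h²); that is, for every B > 0, sup_{‖x‖≤B} h^{−2} ‖(s_h(x), 𝔰_h(x), S_h(x)) − J(f(x), h Df(x), h² D²f(x))‖ → 0 as h → 0, where Df and D²f denote the gradient and Hessian of f. -/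
open MeasureTheory Filter Topology

noncomputable section

/-- The space `H = ℝ × ℝ^d × ℝ^{d×d}` (symmetric matrices sit inside the third factor). -/
abbrev Htriple (d : ℕ) := ℝ × Vec d × (Fin d → Fin d → ℝ)

/-- The matrix `M` with `M_jj = (μ₄ - μ₂₂)/2`, `M_jk = μ₂₂` for `j ≠ k`. -/
def Mmat (d : ℕ) (μ4 μ22 : ℝ) : Fin d → Fin d → ℝ :=
  fun j k => if j = k then (μ4 - μ22) / 2 else μ22

/-- The linear operator `J(c,b,A) = (c + tr A/2, b, c I + A ⊙ M + (μ₂₂/2) tr A · I)`. -/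
def Jop {d : ℕ} (μ4 μ22 : ℝ) (v : Htriple d) : Htriple d :=
  (v.1 + (∑ i, v.2.2 i i) / 2, v.2.1,
    fun j k => (if j = k then v.1 else 0) + v.2.2 j k * Mmat d μ4 μ22 j k +
      (if j = k then μ22 / 2 * ∑ i, v.2.2 i i else 0))

/-- The norm `‖(c,b,A)‖ = (c² + ‖b‖² + ‖A‖_F²/2)^{1/2}` on `H`. -/
def Hnorm {d : ℕ} (v : Htriple d) : ℝ :=
  Real.sqrt (v.1 ^ 2 + (∑ i, v.2.1 i ^ 2) + (∑ j, ∑ k, v.2.2 j k ^ 2) / 2)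

lemma taylor_aux {E : Type*} [NormedAddCommGroup E] [NormedSpace ℝ E] (f : E → ℝ)
    (hf : ContDiff ℝ (2 : ℕ∞) f) (x v : E) (ω : ℝ) (hω0 : 0 ≤ ω)
    (hω : ∀ t ∈ Set.Icc (0 : ℝ) 1,
      |fderiv ℝ (fderiv ℝ f) (x + t • v) v v - fderiv ℝ (fderiv ℝ f) x v v| ≤ ω) :
    |f (x + v) - f x - fderiv ℝ f x v - fderiv ℝ (fderiv ℝ f) x v v / 2| ≤ ω := by
  have hd1 : Differentiable ℝ f := hf.differentiable (by norm_num)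
  have hf1 : ContDiff ℝ 1 (fderiv ℝ f) := hf.fderiv_right (by norm_num)
  have hd2 : Differentiable ℝ (fderiv ℝ f) := hf1.differentiable (by norm_num)
  have hline : ∀ t : ℝ, HasDerivAt (fun t : ℝ => x + t • v) v t := by
    intro t
    simpa using ((hasDerivAt_id t).smul_const v).const_add x
  have h1 : ∀ t : ℝ, HasDerivAt (fun t : ℝ => f (x + t • v)) (fderiv ℝ f (x + t • v) v) t := by
    intro t
    exact (hd1 (x + t • v)).hasFDerivAt.comp_hasDerivAt t (hline t)
  have h2 : ∀ t : ℝ, HasDerivAt (fun t : ℝ => fderiv ℝ f (x + t • v) v)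
      (fderiv ℝ (fderiv ℝ f) (x + t • v) v v) t := by
    intro t
    have := (hd2 (x + t • v)).hasFDerivAt.comp_hasDerivAt t (hline t)
    simpa using this.clm_apply (hasDerivAt_const t v)
  set Q := fderiv ℝ (fderiv ℝ f) x v v with hQ
  set L := fderiv ℝ f x v with hL
  have hχ : ∀ t ∈ Set.Icc (0 : ℝ) 1, |fderiv ℝ f (x + t • v) v - L - t * Q| ≤ ω := by
    intro t ht
    have := norm_image_sub_le_of_norm_deriv_le_segment'
      (f := fun t : ℝ => fderiv ℝ f (x + t • v) v - L - t * Q)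
      (f' := fun t : ℝ => fderiv ℝ (fderiv ℝ f) (x + t • v) v v - Q) (C := ω) (a := 0) (b := 1)
      (by
        intro s hs
        have := ((h2 s).sub_const L).sub ((hasDerivAt_id s).mul_const Q)
        refine (this.congr_deriv ?_).hasDerivWithinAt
        simp)
      (by
        intro s hs
        exact hω s ⟨hs.1, hs.2.le⟩) t ht
    simp only [Real.norm_eq_abs, zero_smul, add_zero, zero_mul, sub_zero] at this
    rw [← hL, sub_self, sub_zero] at this
    exact this.trans (by nlinarith [ht.2])
  have := norm_image_sub_le_of_norm_deriv_le_segment_01'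
      (f := fun t : ℝ => f (x + t • v) - t * L - t ^ 2 * (Q / 2))
      (f' := fun t : ℝ => fderiv ℝ f (x + t • v) v - L - t * Q) (C := ω)
      (by
        intro s hs
        have := ((h1 s).sub ((hasDerivAt_id s).mul_const L)).sub
          ((hasDerivAt_pow 2 s).mul_const (Q / 2))
        refine (this.congr_deriv ?_).hasDerivWithinAt
        simp
        ring)
      (by
        intro s hs
        exact hχ s ⟨hs.1, hs.2.le⟩)
  simp only [Real.norm_eq_abs] at this
  convert this using 2
  simp
  ring

lemma norm_le_eucl {d : ℕ} (z : Vec d) : ‖z‖ ≤ euclNorm z := by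
  unfold euclNorm
  rw [pi_norm_le_iff_of_nonneg (Real.sqrt_nonneg _)]
  intro i
  apply Real.le_sqrt_of_sq_le
  rw [Real.norm_eq_abs, sq_abs]
  exact Finset.single_le_sum (f := fun i => z i ^ 2) (fun i _ => sq_nonneg _) (Finset.mem_univ i)

lemma int_norm_pow {d : ℕ} (K : Vec d → ℝ) (hKmeas : Measurable K) (hKpos : ∀ z, 0 ≤ K z)
    (hKmom : ∀ r : ℝ, 0 < r → Integrable (fun z => K z * euclNorm z ^ r))
    (hK0 : (∫ z : Vec d, K z) = 1) (n : ℕ) : Integrable (fun z => K z * ‖z‖ ^ n) := by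
  rcases Nat.eq_zero_or_pos n with rfl | hn
  · simp only [pow_zero, mul_one]
    by_contra h
    rw [integral_undef h] at hK0
    norm_num at hK0
  · refine (hKmom n (by exact_mod_cast hn)).mono' (by fun_prop) (Eventually.of_forall ?_)
    intro z
    rw [Real.norm_eq_abs, abs_of_nonneg (mul_nonneg (hKpos z) (by positivity)), Real.rpow_natCast]
    exact mul_le_mul_of_nonneg_left (pow_le_pow_left₀ (norm_nonneg z) (norm_le_eucl z) n) (hKpos z)

/-- integrability against functions of polynomial growth -/
lemma int_poly {d : ℕ} (K : Vec d → ℝ) (hKmeas : Measurable K) (hKpos : ∀ z, 0 ≤ K z)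
    (hI : ∀ n : ℕ, Integrable (fun z : Vec d => K z * ‖z‖ ^ n))
    (g : Vec d → ℝ) (hg : Continuous g) (C : ℝ) (n : ℕ)
    (hb : ∀ z, |g z| ≤ C * ‖z‖ ^ n * (1 + ‖z‖ ^ 2)) : Integrable (fun z => K z * g z) := by
  refine (((hI n).add (hI (n + 2))).const_mul C).mono'
    (hKmeas.mul hg.measurable).aestronglyMeasurable (Eventually.of_forall ?_)
  intro z
  rw [Real.norm_eq_abs, abs_mul, abs_of_nonneg (hKpos z)]
  refine (mul_le_mul_of_nonneg_left (hb z) (hKpos z)).trans (le_of_eq ?_)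
  simp only [Pi.add_apply]
  ring

lemma rem_bound_s1 {d : ℕ}
    (f : Vec d → ℝ) (hf : ContDiff ℝ (2 : ℕ∞) f)
    (hfb : ∀ n : ℕ, n ≤ 2 → ∃ C : ℝ, ∀ x : Vec d, ‖iteratedFDeriv ℝ n f x‖ ≤ C)
    (B η : ℝ) (hη : 0 < η) :
    ∃ c : ℝ, 0 ≤ c ∧ ∀ x : Vec d, ‖x‖ ≤ B → ∀ h : ℝ, 0 < h → ∀ z : Vec d,
      |f (x + h • z) - f x - h * fderiv ℝ f x z - h ^ 2 / 2 * fderiv ℝ (fderiv ℝ f) x z z|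
        ≤ h ^ 2 * (η + c * h * ‖z‖) * ‖z‖ ^ 2 := by
  obtain ⟨C, hC⟩ := hfb 2 le_rfl
  have hC0 : 0 ≤ C := (norm_nonneg _).trans (hC 0)
  have hcont : Continuous (iteratedFDeriv ℝ 2 f) := hf.continuous_iteratedFDeriv (by norm_num)
  have huc := (isCompact_closedBall (0 : Vec d) B).uniformContinuousAt_of_continuousAt
    (iteratedFDeriv ℝ 2 f) (fun a _ => hcont.continuousAt) (Metric.dist_mem_uniformity hη)
  rw [Metric.mem_uniformity_dist] at huc
  obtain ⟨ρ, hρ, huc⟩ := huc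
  refine ⟨2 * C / ρ, by positivity, ?_⟩
  intro x hx h hh z
  have hD : ∀ y : Vec d, ‖y - x‖ ≤ h * ‖z‖ →
      ‖iteratedFDeriv ℝ 2 f y - iteratedFDeriv ℝ 2 f x‖ ≤ η + 2 * C / ρ * h * ‖z‖ := by
    intro y hy
    by_cases hlt : dist x y < ρ
    · have := huc hlt (by simpa using hx)
      simp only [Set.mem_ofPred_eq] at this
      rw [dist_comm, dist_eq_norm] at this
      have h0 : 0 ≤ 2 * C / ρ * h * ‖z‖ := by positivity
      linarith
    · push Not at hlt
      have h1 := norm_sub_le (iteratedFDeriv ℝ 2 f y) (iteratedFDeriv ℝ 2 f x)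
      have h2 := hC x
      have h3 := hC y
      rw [dist_comm, dist_eq_norm] at hlt
      have h4 : 2 * C ≤ 2 * C / ρ * h * ‖z‖ := by
        rw [mul_assoc, div_mul_eq_mul_div, le_div_iff₀ hρ]
        exact mul_le_mul_of_nonneg_left (hlt.trans hy) (by positivity)
      linarith
  have := taylor_aux f hf x (h • z) (h ^ 2 * (η + 2 * C / ρ * h * ‖z‖) * ‖z‖ ^ 2)
    (by positivity) (by
      intro t ht
      have e : ∀ y, fderiv ℝ (fderiv ℝ f) y (h • z) (h • z)
          = iteratedFDeriv ℝ 2 f y (fun _ => h • z) := by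
        intro y
        rw [iteratedFDeriv_two_apply]
      rw [e, e, ← sub_apply, ← Real.norm_eq_abs]
      refine (ContinuousMultilinearMap.le_opNorm _ _).trans ?_
      simp only [Finset.prod_const, Finset.card_univ, Fintype.card_fin, norm_smul, Real.norm_eq_abs,
        abs_of_pos hh]
      have := hD (x + t • h • z) (by
        rw [add_sub_cancel_left, norm_smul, norm_smul, Real.norm_eq_abs, Real.norm_eq_abs,
          abs_of_pos hh, abs_of_nonneg ht.1]
        exact mul_le_of_le_one_left (by positivity) ht.2)
      calc _ ≤ (η + 2 * C / ρ * h * ‖z‖) * (h * ‖z‖) ^ 2 := by gcongr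
        _ = _ := by ring)
  convert this using 2
  simp
  ring

lemma main_rem {d : ℕ}
    (f : Vec d → ℝ) (hf : ContDiff ℝ (2 : ℕ∞) f)
    (hfb : ∀ n : ℕ, n ≤ 2 → ∃ C : ℝ, ∀ x : Vec d, ‖iteratedFDeriv ℝ n f x‖ ≤ C)
    (K : Vec d → ℝ) (hKmeas : Measurable K) (hKpos : ∀ z, 0 ≤ K z)
    (hI : ∀ n : ℕ, Integrable (fun z : Vec d => K z * ‖z‖ ^ n)) (B η : ℝ) (hη : 0 < η) :
    ∃ δ > (0 : ℝ), ∀ h : ℝ, 0 < h → h < δ → ∀ x : Vec d, ‖x‖ ≤ B → ∀ w : Vec d → ℝ,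
      Continuous w → (∀ z, |w z| ≤ 1 + ‖z‖ ^ 2) →
      |(∫ z, K z * (f (x + h • z) * w z)) -
        (f x * (∫ z, K z * w z) + h * (∫ z, K z * (fderiv ℝ f x z * w z))
          + h ^ 2 / 2 * ∫ z, K z * (fderiv ℝ (fderiv ℝ f) x z z * w z))| ≤ η * h ^ 2 := by
  set M1 := ∫ z, K z * (‖z‖ ^ 2 * (1 + ‖z‖ ^ 2)) with hM1
  set M2 := ∫ z, K z * (‖z‖ ^ 3 * (1 + ‖z‖ ^ 2)) with hM2
  have hM10 : 0 ≤ M1 := integral_nonneg fun z => mul_nonneg (hKpos z) (by positivity)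
  have hM20 : 0 ≤ M2 := integral_nonneg fun z => mul_nonneg (hKpos z) (by positivity)
  obtain ⟨c, hc, hR⟩ := rem_bound_s1 f hf hfb B (η / (2 * (M1 + 1))) (by positivity)
  obtain ⟨C0, hC0⟩ := hfb 0 (by norm_num)
  simp only [norm_iteratedFDeriv_zero, Real.norm_eq_abs] at hC0
  have hC00 : 0 ≤ C0 := (abs_nonneg _).trans (hC0 0)
  have hfc : Continuous f := hf.continuous
  refine ⟨η / (2 * (c * M2 + 1)), by positivity, ?_⟩
  intro h hh hδ x hx w hw hwb
  have i1 : Integrable fun z => K z * (f (x + h • z) * w z) :=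
    int_poly K hKmeas hKpos hI _ (by fun_prop) C0 0 (fun z => by
      rw [abs_mul, pow_zero, mul_one]
      exact mul_le_mul (hC0 _) (hwb z) (abs_nonneg _) hC00)
  have i2 : Integrable fun z => K z * w z :=
    int_poly K hKmeas hKpos hI _ hw 1 0 (fun z => by simpa using hwb z)
  have i3 : Integrable fun z => K z * (fderiv ℝ f x z * w z) :=
    int_poly K hKmeas hKpos hI _ (by fun_prop) ‖fderiv ℝ f x‖ 1 (fun z => by
      rw [abs_mul, pow_one]
      exact mul_le_mul ((fderiv ℝ f x).le_opNorm z) (hwb z) (abs_nonneg _) (by positivity))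
  have i4 : Integrable fun z => K z * (fderiv ℝ (fderiv ℝ f) x z z * w z) :=
    int_poly K hKmeas hKpos hI _ (by fun_prop) ‖fderiv ℝ (fderiv ℝ f) x‖ 2 (fun z => by
      rw [abs_mul]
      refine mul_le_mul ?_ (hwb z) (abs_nonneg _) (by positivity)
      have := (fderiv ℝ (fderiv ℝ f) x).le_opNorm₂ z z
      rw [Real.norm_eq_abs] at this
      nlinarith)
  have i5 : Integrable fun z => K z * (‖z‖ ^ 2 * (1 + ‖z‖ ^ 2)) :=
    int_poly K hKmeas hKpos hI _ (by fun_prop) 1 2 (fun z => by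
      rw [abs_of_nonneg (by positivity), one_mul])
  have i6 : Integrable fun z => K z * (‖z‖ ^ 3 * (1 + ‖z‖ ^ 2)) :=
    int_poly K hKmeas hKpos hI _ (by fun_prop) 1 3 (fun z => by
      rw [abs_of_nonneg (by positivity), one_mul])
  have i23 : Integrable fun z => f x * (K z * w z) + h * (K z * (fderiv ℝ f x z * w z)) :=
    (i2.const_mul _).add (i3.const_mul _)
  have i234 : Integrable fun z => f x * (K z * w z) + h * (K z * (fderiv ℝ f x z * w z))
      + h ^ 2 / 2 * (K z * (fderiv ℝ (fderiv ℝ f) x z z * w z)) :=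
    i23.add (i4.const_mul _)
  rw [← integral_const_mul, ← integral_const_mul, ← integral_const_mul,
    ← integral_add (i2.const_mul _) (i3.const_mul _),
    ← integral_add i23 (i4.const_mul _),
    ← integral_sub i1 i234,
    ← Real.norm_eq_abs]
  refine (norm_integral_le_of_norm_le
    (g := fun z => h ^ 2 * (η / (2 * (M1 + 1))) * (K z * (‖z‖ ^ 2 * (1 + ‖z‖ ^ 2)))
      + h ^ 2 * (c * h) * (K z * (‖z‖ ^ 3 * (1 + ‖z‖ ^ 2))))
    ((i5.const_mul _).add (i6.const_mul _)) (Eventually.of_forall ?_)).trans ?_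
  · intro z
    have hz := hR x hx h hh z
    calc _ = ‖K z * ((f (x + h • z) - f x - h * fderiv ℝ f x z
            - h ^ 2 / 2 * fderiv ℝ (fderiv ℝ f) x z z) * w z)‖ := by
            congr 1; ring
      _ ≤ K z * ((h ^ 2 * (η / (2 * (M1 + 1)) + c * h * ‖z‖) * ‖z‖ ^ 2) * (1 + ‖z‖ ^ 2)) := by
            rw [Real.norm_eq_abs, abs_mul, abs_mul, abs_of_nonneg (hKpos z)]
            exact mul_le_mul_of_nonneg_left
              (mul_le_mul hz (hwb z) (abs_nonneg _) ((abs_nonneg _).trans hz)) (hKpos z)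
      _ = _ := by ring
  · rw [integral_add (i5.const_mul _) (i6.const_mul _), integral_const_mul, integral_const_mul,
      ← hM1, ← hM2]
    have a1 : η / (2 * (M1 + 1)) * M1 ≤ η / 2 := by
      rw [div_mul_eq_mul_div, div_le_div_iff₀ (by positivity) (by positivity)]
      nlinarith
    have a2 : c * h * M2 ≤ η / 2 := by
      rw [lt_div_iff₀ (by positivity)] at hδ
      nlinarith
    have h2 : 0 < h ^ 2 := by positivity
    nlinarith

lemma odd_zero {d : ℕ} (K : Vec d → ℝ)
    (hK1 : ∀ (ξ : Vec d), (∀ i, ξ i = 1 ∨ ξ i = -1) → ∀ (σ : Equiv.Perm (Fin d)),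
      ∀ z : Vec d, K z = K fun i => ξ i * z (σ i))
    (ξ : Vec d) (hξ : ∀ i, ξ i = 1 ∨ ξ i = -1) (p : Vec d → ℝ)
    (hp : ∀ z, p (fun i => ξ i * z i) = - p z) : ∫ z, K z * p z = 0 := by
  have hmp : MeasurePreserving (fun (z : Vec d) i => ξ i * z i) volume volume := by
    refine volume_preserving_pi (f := fun i (t : ℝ) => ξ i * t) ?_
    intro i
    rcases hξ i with h | h
    · simp only [h, one_mul]
      exact MeasurePreserving.id (volume : Measure ℝ)
    · simpa [h] using Measure.measurePreserving_neg (volume : Measure ℝ)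
  have hinv : Function.Involutive (fun (z : Vec d) i => ξ i * z i) := by
    intro z
    funext i
    rcases hξ i with h | h <;> simp [h]
  have hemb : MeasurableEmbedding (fun (z : Vec d) i => ξ i * z i) :=
    (MeasurableEquiv.ofInvolutive _ hinv hmp.measurable).measurableEmbedding
  have := hmp.integral_comp hemb (fun z => K z * p z)
  simp only [hp, mul_neg, integral_neg] at this
  have h2 : ∀ z, K (fun i => ξ i * z i) = K z := fun z => (hK1 ξ hξ 1 z).symm
  simp only [h2] at this
  linarith

def flipSign {d : ℕ} (j : Fin d) : Vec d := fun i => if i = j then -1 else 1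

lemma flipSign_spec {d : ℕ} (j : Fin d) : ∀ i, flipSign j i = 1 ∨ flipSign j i = -1 := by
  intro i
  unfold flipSign
  split_ifs <;> simp

lemma clm_sum {d : ℕ} {F : Type*} [NormedAddCommGroup F] [NormedSpace ℝ F]
    (L : Vec d →L[ℝ] F) (z : Vec d) : L z = ∑ i, z i • L (Pi.single i 1) := by
  conv_lhs => rw [pi_eq_sum_univ' z]
  simp

lemma expand1 {d : ℕ} (K : Vec d → ℝ) (hKmeas : Measurable K) (hKpos : ∀ z, 0 ≤ K z)
    (hI : ∀ n : ℕ, Integrable (fun z : Vec d => K z * ‖z‖ ^ n)) (L : Vec d →L[ℝ] ℝ)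
    (w : Vec d → ℝ) (hw : Continuous w) (hwb : ∀ z, |w z| ≤ 1 + ‖z‖ ^ 2) :
    ∫ z, K z * (L z * w z) = ∑ i, L (Pi.single i 1) * ∫ z, K z * (z i * w z) := by
  simp only [← integral_const_mul]
  rw [← integral_finsetSum]
  · congr 1
    funext z
    rw [clm_sum L z, Finset.sum_mul, Finset.mul_sum]
    refine Finset.sum_congr rfl fun i _ => ?_
    simp only [smul_eq_mul]
    ring
  · intro i _
    refine Integrable.const_mul ?_ _
    refine int_poly K hKmeas hKpos hI _ (by fun_prop) 1 1 (fun z => ?_)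
    rw [abs_mul, pow_one, one_mul]
    exact mul_le_mul (norm_le_pi_norm z i) (hwb z) (abs_nonneg _) (norm_nonneg _)

lemma expand2 {d : ℕ} (K : Vec d → ℝ) (hKmeas : Measurable K) (hKpos : ∀ z, 0 ≤ K z)
    (hI : ∀ n : ℕ, Integrable (fun z : Vec d => K z * ‖z‖ ^ n)) (L : Vec d →L[ℝ] Vec d →L[ℝ] ℝ)
    (w : Vec d → ℝ) (hw : Continuous w) (hwb : ∀ z, |w z| ≤ 1 + ‖z‖ ^ 2) :
    ∫ z, K z * (L z z * w z) =
      ∑ a, ∑ b, L (Pi.single a 1) (Pi.single b 1) * ∫ z, K z * (z a * z b * w z) := by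
  have hint : ∀ a b : Fin d, Integrable fun z : Vec d =>
      L (Pi.single a 1) (Pi.single b 1) * (K z * (z a * z b * w z)) := by
    intro a b
    refine Integrable.const_mul ?_ _
    refine int_poly K hKmeas hKpos hI _ (by fun_prop) 1 2 (fun z => ?_)
    rw [abs_mul, abs_mul, one_mul, sq]
    exact mul_le_mul (mul_le_mul (norm_le_pi_norm z a) (norm_le_pi_norm z b) (abs_nonneg _)
      (norm_nonneg _)) (by simpa [sq] using hwb z) (abs_nonneg _) (by positivity)
  simp only [← integral_const_mul]
  have : ∀ a, ∑ b, ∫ z, L (Pi.single a 1) (Pi.single b 1) * (K z * (z a * z b * w z))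
      = ∫ z, ∑ b, L (Pi.single a 1) (Pi.single b 1) * (K z * (z a * z b * w z)) := by
    intro a
    rw [integral_finsetSum]
    exact fun b _ => hint a b
  simp only [this]
  rw [← integral_finsetSum]
  · congr 1
    funext z
    have e : L z z = ∑ a, ∑ b, z a * (z b * L (Pi.single a 1) (Pi.single b 1)) := by
      rw [clm_sum L z]
      simp only [sum_apply, smul_apply, smul_eq_mul]
      refine Finset.sum_congr rfl fun a _ => ?_
      rw [clm_sum (L (Pi.single a 1)) z, Finset.mul_sum]
      rfl
    rw [e, Finset.sum_mul, Finset.mul_sum]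
    refine Finset.sum_congr rfl fun i _ => ?_
    rw [Finset.sum_mul, Finset.mul_sum]
    refine Finset.sum_congr rfl fun i _ => ?_
    ring
  · intro a _
    exact integrable_finsetSum _ fun b _ => hint a b

lemma mom1 {d : ℕ} (K : Vec d → ℝ)
    (hK1 : ∀ (ξ : Vec d), (∀ i, ξ i = 1 ∨ ξ i = -1) → ∀ (σ : Equiv.Perm (Fin d)),
      ∀ z : Vec d, K z = K fun i => ξ i * z (σ i)) (a : Fin d) :
    ∫ z, K z * z a = 0 :=
  odd_zero K hK1 (fun _ => -1) (by simp) (fun z => z a) (by intro z; simp)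

lemma mom3 {d : ℕ} (K : Vec d → ℝ)
    (hK1 : ∀ (ξ : Vec d), (∀ i, ξ i = 1 ∨ ξ i = -1) → ∀ (σ : Equiv.Perm (Fin d)),
      ∀ z : Vec d, K z = K fun i => ξ i * z (σ i)) (a b c : Fin d) :
    ∫ z, K z * z a * z b * z c = 0 := by
  have := odd_zero K hK1 (fun _ => -1) (by simp) (fun z => z a * z b * z c) (by intro z; simp)
  simpa [mul_assoc] using this

lemma mom4 {d : ℕ} (K : Vec d → ℝ)
    (hK1 : ∀ (ξ : Vec d), (∀ i, ξ i = 1 ∨ ξ i = -1) → ∀ (σ : Equiv.Perm (Fin d)),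
      ∀ z : Vec d, K z = K fun i => ξ i * z (σ i)) (a b j k i : Fin d)
    (ho : flipSign i a * flipSign i b * (flipSign i j * flipSign i k) = -1) :
    ∫ z, K z * (z a * z b * (z j * z k)) = 0 := by
  refine odd_zero K hK1 (flipSign i) (flipSign_spec i) (fun z => z a * z b * (z j * z k)) ?_
  intro z
  simp only
  linear_combination (z a * z b * (z j * z k)) * ho

lemma quad_sum {d : ℕ} (K : Vec d → ℝ)
    (hK1 : ∀ (ξ : Vec d), (∀ i, ξ i = 1 ∨ ξ i = -1) → ∀ (σ : Equiv.Perm (Fin d)),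
      ∀ z : Vec d, K z = K fun i => ξ i * z (σ i))
    (μ4 μ22 : ℝ)
    (hμ4 : ∀ i : Fin d, μ4 = ∫ z : Vec d, K z * z i ^ 4)
    (hμ22 : ∀ i j : Fin d, i ≠ j → μ22 = ∫ z : Vec d, K z * z i ^ 2 * z j ^ 2)
    (A : Fin d → Fin d → ℝ) (hA : ∀ a b, A a b = A b a) (j k : Fin d) :
    ∑ a, ∑ b, A a b * ∫ z, K z * (z a * z b * (z j * z k)) =
      2 * (A j k * Mmat d μ4 μ22 j k) + (if j = k then μ22 * ∑ i, A i i else 0) := by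
  by_cases hjk : j = k
  · subst hjk
    have hT : ∀ a b, ∫ z, K z * (z a * z b * (z j * z j)) =
        if a = b then (μ22 + if a = j then μ4 - μ22 else 0) else 0 := by
      intro a b
      split_ifs with h1 h2
      · subst h1 h2
        rw [add_sub_cancel, hμ4 a]
        congr 1; funext z; ring
      · subst h1
        rw [add_zero, hμ22 a j h2]
        congr 1; funext z; ring
      · by_cases h2 : a = j
        · exact mom4 K hK1 a b j j b (by
            have : j ≠ b := h2 ▸ h1
            simp [flipSign, h1, this])
        · exact mom4 K hK1 a b j j a (by
            simp [flipSign, Ne.symm h1, Ne.symm h2])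
    simp only [hT, mul_ite, mul_zero, Finset.sum_ite_eq, Finset.mem_univ, if_true, mul_add,
      Finset.sum_add_distrib, Finset.sum_ite_eq', ← Finset.sum_mul, Mmat]
    ring
  · have hT : ∀ a b, ∫ z, K z * (z a * z b * (z j * z k)) =
        (if a = j then (if b = k then μ22 else 0) else 0)
          + (if a = k then (if b = j then μ22 else 0) else 0) := by
      intro a b
      have hkj : k ≠ j := Ne.symm hjk
      by_cases haj : a = j
      · subst haj
        by_cases hbk : b = k
        · subst hbk
          simp only [if_true, hjk, if_false, add_zero]
          rw [hμ22 a b hjk]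
          congr 1; funext z; ring
        · simp only [hbk, hjk, if_false, if_true, add_zero]
          exact mom4 K hK1 a b a k k (by simp [flipSign, hbk, hjk])
      · by_cases hak : a = k
        · subst hak
          by_cases hbj : b = j
          · subst hbj
            simp only [if_true, haj, if_false, zero_add]
            rw [hμ22 a b haj]
            congr 1; funext z; ring
          · simp only [hbj, haj, if_false, if_true, add_zero]
            exact mom4 K hK1 a b j a j (by simp [flipSign, hbj, haj])
        · simp only [haj, hak, if_false, add_zero]
          by_cases hbj : b = j
          · exact mom4 K hK1 a b j k k (by
              subst hbj; simp [flipSign, hak, hjk])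
          · exact mom4 K hK1 a b j k j (by simp [flipSign, hbj, haj, hkj])
    simp only [hT, mul_add, mul_ite, mul_zero, Finset.sum_add_distrib]
    have e1 : ∀ p q : Fin d, ∑ a, ∑ b, (if a = p then (if b = q then A a b * μ22 else 0) else 0)
        = A p q * μ22 := by
      intro p q
      rw [Finset.sum_eq_single p]
      · simp
      · intro a _ ha
        simp [ha]
      · simp
    rw [e1, e1, hA k j]
    simp only [Mmat, hjk, if_false]
    ring

lemma Hnorm_le {d : ℕ} (v : Htriple d) (ε h : ℝ) (hε : 0 < ε)
    (h1 : |v.1| ≤ ε / (1 + d + d ^ 2) * h ^ 2)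
    (h2 : ∀ i, |v.2.1 i| ≤ ε / (1 + d + d ^ 2) * h ^ 2)
    (h3 : ∀ j k, |v.2.2 j k| ≤ ε / (1 + d + d ^ 2) * h ^ 2) : Hnorm v ≤ ε * h ^ 2 := by
  set t := ε / (1 + d + d ^ 2) * h ^ 2 with ht
  have ht0 : 0 ≤ t := by positivity
  have hte : ε * h ^ 2 = (1 + d + d ^ 2) * t := by
    rw [ht]; field_simp
  have hsq : ∀ y : ℝ, |y| ≤ t → y ^ 2 ≤ t ^ 2 := fun y hy => sq_le_sq' (abs_le.1 hy).1 (abs_le.1 hy).2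
  have s2 : ∑ i, v.2.1 i ^ 2 ≤ d * t ^ 2 := by
    refine (Finset.sum_le_sum fun i _ => hsq _ (h2 i)).trans (le_of_eq ?_)
    simp
  have s3 : ∑ j, ∑ k, v.2.2 j k ^ 2 ≤ d ^ 2 * t ^ 2 := by
    refine (Finset.sum_le_sum fun j _ => Finset.sum_le_sum fun k _ => hsq _ (h3 j k)).trans
      (le_of_eq ?_)
    simp
    ring
  have s1 := hsq _ h1
  have hd0 : (0 : ℝ) ≤ d := Nat.cast_nonneg d
  rw [hte]
  apply Real.sqrt_le_iff.2
  refine ⟨by positivity, ?_⟩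
  have q1 : (1 + d + (d : ℝ) ^ 2) * t ^ 2 ≤ ((1 + d + (d : ℝ) ^ 2) * t) ^ 2 := by
    rw [mul_pow _ t]
    have q0 : (1 + d + (d : ℝ) ^ 2) ≤ (1 + d + (d : ℝ) ^ 2) ^ 2 := by
      have : (1 : ℝ) ≤ 1 + d + (d : ℝ) ^ 2 := by nlinarith [sq_nonneg (d : ℝ)]
      nlinarith
    exact mul_le_mul_of_nonneg_right q0 (sq_nonneg t)
  have : 0 ≤ (d : ℝ) ^ 2 * t ^ 2 := by positivity
  nlinarith

/-- `(s_h(x), 𝔰_h(x), S_h(x)) = J(f(x), h Df(x), h² D²f(x)) + o(h²)`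
locally uniformly in `x`, for a `C_b²` density `f` and a kernel with (K0)-(K2). -/
theorem statement1 {d : ℕ} (hd : 1 ≤ d)
    (f : Vec d → ℝ) (hf : ContDiff ℝ (2 : ℕ∞) f)
    (hfb : ∀ n : ℕ, n ≤ 2 → ∃ C : ℝ, ∀ x : Vec d, ‖iteratedFDeriv ℝ n f x‖ ≤ C)
    (K : Vec d → ℝ) (hKmeas : Measurable K) (hKpos : ∀ z, 0 ≤ K z)
    (hKbd : ∃ C : ℝ, ∀ z, K z ≤ C)
    (hKmom : ∀ r : ℝ, 0 < r → Integrable (fun z => K z * euclNorm z ^ r))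
    (hK0 : (∫ z : Vec d, K z) = 1)
    (hK1 : ∀ (ξ : Vec d), (∀ i, ξ i = 1 ∨ ξ i = -1) → ∀ (σ : Equiv.Perm (Fin d)),
      ∀ z : Vec d, K z = K fun i => ξ i * z (σ i))
    (hK2 : ∀ i j : Fin d, (∫ z : Vec d, K z * z i * z j) = if i = j then 1 else 0)
    (μ4 μ22 : ℝ)
    (hμ4 : ∀ i : Fin d, μ4 = ∫ z : Vec d, K z * z i ^ 4)
    (hμ22 : ∀ i j : Fin d, i ≠ j → μ22 = ∫ z : Vec d, K z * z i ^ 2 * z j ^ 2)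
    (hμ22' : d = 1 → μ22 = 1) :
    ∀ B > (0 : ℝ), ∀ ε > (0 : ℝ), ∃ δ > (0 : ℝ), ∀ h : ℝ, 0 < h → h < δ →
      ∀ x : Vec d, euclNorm x ≤ B →
        Hnorm
          (((∫ z : Vec d, K z * f (x + h • z),
              ∫ z : Vec d, (K z * f (x + h • z)) • z,
              fun j k => ∫ z : Vec d, K z * f (x + h • z) * z j * z k) : Htriple d) -
            Jop μ4 μ22
              (f x, fun i => h * fderiv ℝ f x (Pi.single i 1),
                fun j k => h ^ 2 * iteratedFDeriv ℝ 2 f x ![Pi.single j 1, Pi.single k 1]))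
          ≤ ε * h ^ 2 := by
  intro B hB ε hε
  have hI := int_norm_pow K hKmeas hKpos hKmom hK0
  have hη : 0 < ε / (1 + d + d ^ 2) := by positivity
  obtain ⟨δ, hδ, H⟩ := main_rem f hf hfb K hKmeas hKpos hI B _ hη
  refine ⟨δ, hδ, fun h hh hhδ x hx => ?_⟩
  have H := H h hh hhδ x ((norm_le_eucl x).trans hx)
  have hsymm : ∀ u v, fderiv ℝ (fderiv ℝ f) x u v = fderiv ℝ (fderiv ℝ f) x v u :=
    fun u v => (hf.contDiffAt.isSymmSndFDerivAt (by simp)) u v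
  obtain ⟨C0, hC0⟩ := hfb 0 (by norm_num)
  simp only [norm_iteratedFDeriv_zero, Real.norm_eq_abs] at hC0
  have hC00 : 0 ≤ C0 := (abs_nonneg _).trans (hC0 0)
  have hfc : Continuous f := hf.continuous
  have w1 : ∀ i : Fin d, ∀ z : Vec d, |z i| ≤ 1 + ‖z‖ ^ 2 := fun i z => by
    have := norm_le_pi_norm z i
    rw [Real.norm_eq_abs] at this
    nlinarith [sq_nonneg (‖z‖ - 1)]
  have w2 : ∀ i j : Fin d, ∀ z : Vec d, |z i * z j| ≤ 1 + ‖z‖ ^ 2 := fun i j z => by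
    have h1 := norm_le_pi_norm z i
    have h2 := norm_le_pi_norm z j
    rw [Real.norm_eq_abs] at h1 h2
    rw [abs_mul]
    nlinarith [mul_le_mul h1 h2 (abs_nonneg _) (norm_nonneg _)]
  refine Hnorm_le _ _ _ hε ?_ ?_ ?_
  · have := H (fun _ => 1) continuous_const (fun z => by simp)
    rw [expand1 K hKmeas hKpos hI _ _ continuous_const (fun z => by simp),
      expand2 K hKmeas hKpos hI _ _ continuous_const (fun z => by simp)] at this
    simp only [mul_one, hK0, mom1 K hK1, mul_zero, Finset.sum_const_zero, add_zero,
      ← mul_assoc, hK2, mul_ite, Finset.sum_ite_eq, Finset.mem_univ, if_true] at this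
    convert this using 2
    simp only [Jop, Prod.fst_sub, iteratedFDeriv_two_apply]
    simp [← Finset.mul_sum]
    ring
  · intro i
    have := H (fun z => z i) (by fun_prop) (w1 i)
    rw [expand1 K hKmeas hKpos hI _ _ (by fun_prop) (w1 i),
      expand2 K hKmeas hKpos hI _ _ (by fun_prop) (w1 i)] at this
    simp only [mom1 K hK1, mom3 K hK1, mul_zero, Finset.sum_const_zero, add_zero, zero_add,
      ← mul_assoc] at this
    simp only [hK2, mul_ite, mul_one, mul_zero, Finset.sum_ite_eq', Finset.mem_univ, if_true]
      at this
    convert this using 2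
    simp only [Jop, Prod.fst_sub, Prod.snd_sub, Pi.sub_apply]
    congr 1
    rw [eval_integral]
    · simp
    · intro j
      have := int_poly K hKmeas hKpos hI (fun z => f (x + h • z) * z j) (by fun_prop) C0 0
        (fun z => by
          rw [abs_mul, pow_zero, mul_one]
          exact mul_le_mul (hC0 _) (w1 j z) (abs_nonneg _) hC00)
      simpa [mul_assoc] using this
  · intro j k
    have := H (fun z => z j * z k) (by fun_prop) (w2 j k)
    rw [expand1 K hKmeas hKpos hI _ _ (by fun_prop) (w2 j k),
      expand2 K hKmeas hKpos hI _ _ (by fun_prop) (w2 j k)] at this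
    have e3 : ∀ a, ∫ z : Vec d, K z * (z a * (z j * z k)) = 0 := fun a => by
      simpa [mul_assoc] using mom3 K hK1 a j k
    have e2 : ∫ z : Vec d, K z * (z j * z k) = if j = k then 1 else 0 := by
      simpa [mul_assoc] using hK2 j k
    simp only [e3, e2, mul_zero, Finset.sum_const_zero, add_zero] at this
    rw [quad_sum K hK1 μ4 μ22 hμ4 hμ22 (fun a b => fderiv ℝ (fderiv ℝ f) x (Pi.single a 1) (Pi.single b 1))
      (fun a b => hsymm _ _) j k] at this
    convert this using 2
    simp only [Jop, Prod.fst_sub, Prod.snd_sub, Pi.sub_apply, iteratedFDeriv_two_apply, ← mul_assoc]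
    congr 1
    simp only [Matrix.cons_val_zero, Matrix.cons_val_one, ← Finset.mul_sum]
    split_ifs <;> ring
end
end
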